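/- If the diagonal entries D_1, …, D_n are pairwise distinct, then no D_k (k = 1, …, n) is an eigenvalue of A = D + J. -/

import Mathlib

/-!
For an eigenvector `w` of `diagonal D + vecMulVec u v` with eigenvalue `D k`, row `k` of the
eigenvalue equation reads `D k * w k + u k * (v ⬝ᵥ w) = D k * w k`, so `v ⬝ᵥ w = 0`. The rank-one
term therefore drops out of every row, which leaves `D i * w i = D k * w i` and forces `w` to be
supported at `k`; then `v ⬝ᵥ w = v k * w k = 0` gives `w = 0`. The all-ones matrix is the case
`u = v = 1`.
-/

open Matrix

theorem vecMulVec_one_one {m n R : Type*} [MulOneClass R] :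
    vecMulVec (1 : m → R) (1 : n → R) = of fun _ _ => 1 :=
  Matrix.ext fun _ _ => mul_one 1

section RankOnePerturbation

variable {ι R : Type*} [Fintype ι] [DecidableEq ι]

theorem diagonal_add_vecMulVec_mulVec_apply [NonUnitalSemiring R] (D u v w : ι → R) (i : ι) :
    ((diagonal D + vecMulVec u v) *ᵥ w) i = D i * w i + u i * (v ⬝ᵥ w) := by
  simp [add_mulVec, mulVec_diagonal, vecMulVec_mulVec]

variable [NonUnitalRing R] [NoZeroDivisors R] {D u v w : ι → R} {k : ι}

theorem dotProduct_eq_zero_of_diagonal_add_vecMulVec_mulVec_eq_smul (hu : u k ≠ 0)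
    (hw : (diagonal D + vecMulVec u v) *ᵥ w = D k • w) : v ⬝ᵥ w = 0 := by
  have row_k : D k * w k + u k * (v ⬝ᵥ w) = D k * w k := by
    rw [← diagonal_add_vecMulVec_mulVec_apply, hw, Pi.smul_apply, smul_eq_mul]
  exact (mul_eq_zero.mp (add_eq_left.mp row_k)).resolve_left hu

theorem apply_eq_zero_of_diagonal_add_vecMulVec_mulVec_eq_smul (hu : u k ≠ 0)
    (hw : (diagonal D + vecMulVec u v) *ᵥ w = D k • w) {i : ι} (hi : D i ≠ D k) : w i = 0 := by
  have row_i : D i * w i = D k * w i := by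
    rw [← smul_eq_mul (D k), ← Pi.smul_apply, ← hw, diagonal_add_vecMulVec_mulVec_apply,
      dotProduct_eq_zero_of_diagonal_add_vecMulVec_mulVec_eq_smul hu hw, mul_zero, add_zero]
  have diff_mul : (D i - D k) * w i = 0 := by rw [sub_mul, row_i, sub_self]
  exact (mul_eq_zero.mp diff_mul).resolve_left (sub_ne_zero.mpr hi)

theorem stmt1_general (hu : u k ≠ 0) (hv : v k ≠ 0) (hD : ∀ i, i ≠ k → D i ≠ D k) :
    ¬ ∃ w : ι → R, w ≠ 0 ∧ (diagonal D + vecMulVec u v) *ᵥ w = D k • w := by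
  rintro ⟨w, hw_ne, hw⟩
  have off_k (i : ι) (hi : i ≠ k) : w i = 0 :=
    apply_eq_zero_of_diagonal_add_vecMulVec_mulVec_eq_smul hu hw (hD i hi)
  have mul_at_k : v k * w k = 0 := calc
    v k * w k = v ⬝ᵥ w := by
      rw [dotProduct, Fintype.sum_eq_single k fun i hi => by rw [off_k i hi, mul_zero]]
    _ = 0 := dotProduct_eq_zero_of_diagonal_add_vecMulVec_mulVec_eq_smul hu hw
  have at_k : w k = 0 := (mul_eq_zero.mp mul_at_k).resolve_left hv
  exact hw_ne (funext fun i => (eq_or_ne i k).elim (fun hi => hi ▸ at_k) (off_k i))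

end RankOnePerturbation

/-- If the diagonal entries `D_1, …, D_n` (`n = 2p`) are pairwise distinct, then no `D_k`
is an eigenvalue of `A = D + J`, where `J` is the all-ones matrix. -/
theorem stmt1 (p : ℕ) (hp : 1 ≤ p) (D : Fin (2*p) → ℂ)
    (hD : Function.Injective D) (k : Fin (2*p)) :
    ¬ ∃ W : Fin (2*p) → ℂ, W ≠ 0 ∧
      (Matrix.diagonal D + Matrix.of fun _ _ => (1 : ℂ)).mulVec W = D k • W := by
  rw [← vecMulVec_one_one]
  exact stmt1_general one_ne_zero one_ne_zero fun _ => hD.ne
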